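/- Let W be the group of linear transformations of ℝ³ generated by r₁(a,b,c) = (b,a,c), r₂(a,b,c) = (a,b,a+b−c) and r₃(a,b,c) = (c,a+b−c,a). Then for every nonzero (a,b,c) ∈ ℝ³ there exist w ∈ W and a nonzero real number t such that the vector (a′,b′,c′) = t·w(a,b,c) satisfies a′ > 0, 2c′ ≥ a′ + b′ ≥ 0 and a′ ≥ c′ ≥ b′. -/

import Mathlib

open Matrix

/-- Matrix of r₁(a,b,c) = (b,a,c). -/
def M1 : Matrix (Fin 3) (Fin 3) ℝ := !![0, 1, 0; 1, 0, 0; 0, 0, 1]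

/-- Matrix of r₂(a,b,c) = (a,b,a+b−c). -/
def M2 : Matrix (Fin 3) (Fin 3) ℝ := !![1, 0, 0; 0, 1, 0; 1, 1, -1]

/-- Matrix of r₃(a,b,c) = (c,a+b−c,a). -/
def M3 : Matrix (Fin 3) (Fin 3) ℝ := !![0, 0, 1; 1, 1, -1; 1, 0, 0]

lemma M1_inv : M1 * M1 = 1 := by
  simp [M1, Matrix.mul_fin_three, Matrix.one_fin_three]

lemma M2_inv : M2 * M2 = 1 := by
  norm_num [M2, Matrix.mul_fin_three]
  exact Matrix.one_fin_three.symm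

lemma M3_inv : M3 * M3 = 1 := by
  norm_num [M3, Matrix.mul_fin_three]
  exact Matrix.one_fin_three.symm

/-- r₁ as an invertible linear transformation of ℝ³. -/
def u1 : GL (Fin 3) ℝ := ⟨M1, M1, M1_inv, M1_inv⟩

/-- r₂ as an invertible linear transformation of ℝ³. -/
def u2 : GL (Fin 3) ℝ := ⟨M2, M2, M2_inv, M2_inv⟩

/-- r₃ as an invertible linear transformation of ℝ³. -/
def u3 : GL (Fin 3) ℝ := ⟨M3, M3, M3_inv, M3_inv⟩

/-- The group W of linear transformations of ℝ³ generated by r₁, r₂, r₃. -/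
def W : Subgroup (GL (Fin 3) ℝ) := Subgroup.closure {u1, u2, u3}

/-
In the coordinates s = a + b, x = a - b, y = 2c - a - b on ℝ³, the generators fix s, while r₁
negates x, r₂ negates y and r₃ swaps x and y; so W acts on the (x, y)-plane as the Weyl group of
type B₂. Negating the vector if necessary gives s ≥ 0, and W then moves (x, y) into the chamber
x ≥ y ≥ 0 without changing s. Finally 2a = s + x, which is nonnegative and vanishes only if
s = x = y = 0.
-/

lemma M1_mulVec (v : Fin 3 → ℝ) : M1 *ᵥ v = ![v 1, v 0, v 2] := by
  ext i; fin_cases i <;> simp [M1, mulVec, dotProduct, Fin.sum_univ_three]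

lemma M2_mulVec (v : Fin 3 → ℝ) : M2 *ᵥ v = ![v 0, v 1, v 0 + v 1 - v 2] := by
  ext i; fin_cases i <;> simp [M2, mulVec, dotProduct, Fin.sum_univ_three, sub_eq_add_neg]

lemma M3_mulVec (v : Fin 3 → ℝ) : M3 *ᵥ v = ![v 2, v 0 + v 1 - v 2, v 0] := by
  ext i; fin_cases i <;> simp [M3, mulVec, dotProduct, Fin.sum_univ_three, sub_eq_add_neg]

lemma u1_mem_W : u1 ∈ W := Subgroup.subset_closure (by simp)

lemma u2_mem_W : u2 ∈ W := Subgroup.subset_closure (by simp)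

lemma u3_mem_W : u3 ∈ W := Subgroup.subset_closure (by simp)

lemma mulVec_zero_add_mulVec_one_of_mem_W {w : GL (Fin 3) ℝ} (hw : w ∈ W) (v : Fin 3 → ℝ) :
    (w.val *ᵥ v) 0 + (w.val *ᵥ v) 1 = v 0 + v 1 := by
  induction hw using Subgroup.closure_induction generalizing v with
  | mem w hw =>
    rcases hw with rfl | rfl | rfl
    · simp [u1, M1_mulVec, add_comm]
    · simp [u2, M2_mulVec]
    · simp [u3, M3_mulVec]
  | one => simp
  | mul g h _ _ ihg ihh => rw [Units.val_mul, ← mulVec_mulVec, ihg, ihh]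
  | inv g _ ih => rw [← ih, mulVec_mulVec, Units.mul_inv, one_mulVec]

lemma exists_mem_mulVec_mem_of_mulVec {n R : Type*} [Fintype n] [DecidableEq n] [CommRing R]
    {G : Subgroup (GL n R)} {C : Set (n → R)} {g : GL n R} (hg : g ∈ G) {v : n → R}
    (h : ∃ w ∈ G, w.val *ᵥ (g.val *ᵥ v) ∈ C) : ∃ w ∈ G, w.val *ᵥ v ∈ C := by
  obtain ⟨w, hw, hC⟩ := h
  exact ⟨w * g, G.mul_mem hw hg, by rwa [Units.val_mul, ← mulVec_mulVec]⟩

/-- The closed Weyl chamber `x ≥ y ≥ 0` of `W`, where `x = a - b` and `y = 2c - a - b`; every orbit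
of `W` meets it. The conditions `y ≥ 0` and `x ≥ y` are written as `a + b ≤ 2c` and `c ≤ a`. -/
def weylChamber : Set (Fin 3 → ℝ) := {v | v 0 + v 1 ≤ 2 * v 2 ∧ v 2 ≤ v 0}

lemma apply_one_le_apply_two_of_mem_weylChamber {v : Fin 3 → ℝ} (hv : v ∈ weylChamber) :
    v 1 ≤ v 2 := by
  linarith [hv.1, hv.2]

lemma apply_zero_pos_of_mem_weylChamber {v : Fin 3 → ℝ} (hv : v ∈ weylChamber)
    (hsum : 0 ≤ v 0 + v 1) (hne : v ≠ 0) : 0 < v 0 := by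
  obtain ⟨hy, hxy⟩ := hv
  contrapose! hne
  have h₀ : v 0 = 0 := by linarith
  have h₁ : v 1 = 0 := by linarith
  have h₂ : v 2 = 0 := by linarith
  ext i
  fin_cases i <;> assumption

theorem exists_mem_W_mulVec_mem_weylChamber (v : Fin 3 → ℝ) :
    ∃ w ∈ W, w.val *ᵥ v ∈ weylChamber := by
  wlog hx : v 1 ≤ v 0 generalizing v
  · refine exists_mem_mulVec_mem_of_mulVec u1_mem_W (this (M1 *ᵥ v) ?_)
    simpa [M1_mulVec] using le_of_not_ge hx
  wlog hy : v 0 + v 1 ≤ 2 * v 2 generalizing v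
  · refine exists_mem_mulVec_mem_of_mulVec u2_mem_W (this (M2 *ᵥ v) ?_ ?_)
    · simpa [M2_mulVec] using hx
    · simp only [M2_mulVec, cons_val]
      linarith
  wlog hxy : v 2 ≤ v 0 generalizing v
  · refine exists_mem_mulVec_mem_of_mulVec u3_mem_W (this (M3 *ᵥ v) ?_ ?_ ?_) <;>
      simp only [M3_mulVec, cons_val] <;> linarith
  exact ⟨1, W.one_mem, by simpa using ⟨hy, hxy⟩⟩

theorem stmt8 (v : Fin 3 → ℝ) (hv : v ≠ 0) :
    ∃ w ∈ W, ∃ t : ℝ, t ≠ 0 ∧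
      0 < (t • ((w : Matrix (Fin 3) (Fin 3) ℝ).mulVec v)) 0 ∧
      (t • ((w : Matrix (Fin 3) (Fin 3) ℝ).mulVec v)) 0 +
          (t • ((w : Matrix (Fin 3) (Fin 3) ℝ).mulVec v)) 1 ≤
        2 * (t • ((w : Matrix (Fin 3) (Fin 3) ℝ).mulVec v)) 2 ∧
      0 ≤ (t • ((w : Matrix (Fin 3) (Fin 3) ℝ).mulVec v)) 0 +
          (t • ((w : Matrix (Fin 3) (Fin 3) ℝ).mulVec v)) 1 ∧
      (t • ((w : Matrix (Fin 3) (Fin 3) ℝ).mulVec v)) 2 ≤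
        (t • ((w : Matrix (Fin 3) (Fin 3) ℝ).mulVec v)) 0 ∧
      (t • ((w : Matrix (Fin 3) (Fin 3) ℝ).mulVec v)) 1 ≤
        (t • ((w : Matrix (Fin 3) (Fin 3) ℝ).mulVec v)) 2 := by
  obtain ⟨t, ht, hts⟩ : ∃ t : ℝ, t ≠ 0 ∧ 0 ≤ t * (v 0 + v 1) := by
    rcases le_total 0 (v 0 + v 1) with hs | hs
    · exact ⟨1, one_ne_zero, by simpa using hs⟩
    · exact ⟨-1, by simp, by linarith⟩
  obtain ⟨w, hw, hC⟩ := exists_mem_W_mulVec_mem_weylChamber (t • v)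
  rw [mulVec_smul] at hC
  have hsum : 0 ≤ (t • (w.val *ᵥ v)) 0 + (t • (w.val *ᵥ v)) 1 := by
    simpa only [Pi.smul_apply, smul_eq_mul, ← mul_add,
      mulVec_zero_add_mulVec_one_of_mem_W hw] using hts
  have hne : t • (w.val *ᵥ v) ≠ 0 :=
    smul_ne_zero ht fun h ↦ hv (mulVec_injective_of_isUnit w.isUnit (by simpa using h))
  exact ⟨w, hw, t, ht, apply_zero_pos_of_mem_weylChamber hC hsum hne, hC.1, hsum, hC.2,
    apply_one_le_apply_two_of_mem_weylChamber hC⟩
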